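/- arXiv:0711.3100 — 3 statements merged into one kernel-verified Lean document; each statement's English description precedes it below -/
import Mathlib

section
/- Solution of the electrostatic equation in the Coulomb gauge: Let f : ℝ³ → ℝ be a Schwartz function. Then the function A_e(x) = ∫_{ℝ³} f(y)/(4π|x−y|) dy is well defined, smooth on ℝ³, and satisfies −ΔA_e = f pointwise on ℝ³. -/
/-!
After the change of variables `y = x - z`, the potential is `∫ (4π‖z‖)⁻¹ f (x - z) dz`. The kernel is
integrable against any rapidly decreasing weight (`integrable_inv_norm_mul_weight`), and a Schwartz
function decays uniformly under bounded translations (`schwartz_decay`), so one may differentiate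
under the integral sign and let every derivative fall on `f` (`hasFDerivAt_coulombPotential`). As
derivatives of Schwartz functions are Schwartz, the potential is smooth and its Laplacian is the
potential of `Δf`.

It remains to see that the potential of `Δf` is `-f` (`sum_coulombPotential`). The singular kernel
`1/‖z‖` is replaced by the smooth one `c / √(1 + c²‖z‖²)`. Integrating by parts twice moves the
Laplacian onto it (`integral_kernel_second`), and its Laplacian is
`-3c³ / (1 + c²‖z‖²)^(5/2) = -4π c³ φ(cz)`, where `φ(w) = 3 / (4π (1 + ‖w‖²)^(5/2))` has integral `1`
(`integral_bump`). As `c → ∞`, one side tends to the potential of `Δf` by dominated convergence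
(`tendsto_integral_kernel`) and the other to `-f(x)`, since `c³ φ(c ·)` is an approximate identity
(`tendsto_integral_bump`).
-/

noncomputable section
open MeasureTheory Real
open scoped RealInnerProductSpace

/-- Physical space `ℝ³` with the Euclidean norm. -/
abbrev R3 : Type := EuclideanSpace ℝ (Fin 3)

/-- Spatial partial derivative `∂ₖ` of a complex-valued function on `ℝ³`. -/
def pdC (k : Fin 3) (f : R3 → ℂ) (x : R3) : ℂ := fderiv ℝ f x (EuclideanSpace.single k 1)

/-- Spatial partial derivative `∂ₖ` of a real-valued function on `ℝ³`. -/
def pdR (k : Fin 3) (f : R3 → ℝ) (x : R3) : ℝ := fderiv ℝ f x (EuclideanSpace.single k 1)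

/-- Laplacian of a complex-valued function on `ℝ³`. -/
def lapC (f : R3 → ℂ) (x : R3) : ℂ := ∑ k : Fin 3, pdC k (pdC k f) x

/-- Laplacian of a real-valued function on `ℝ³`. -/
def lapR (f : R3 → ℝ) (x : R3) : ℝ := ∑ k : Fin 3, pdR k (pdR k f) x

/-- Divergence `∇·A` of a vector field on `ℝ³`. -/
def divg (A : R3 → R3) (x : R3) : ℝ := ∑ k : Fin 3, pdR k (fun y => A y k) x

/-- Component `k` of the covariant gradient `∇_A u = ∇u − iAu`. -/
def covGrad (A : R3 → R3) (u : R3 → ℂ) (k : Fin 3) (x : R3) : ℂ :=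
  pdC k u x - Complex.I * (A x k : ℂ) * u x

/-- Covariant Laplacian `Δ_A u = Δu − 2iA·∇u − i(∇·A)u − |A|²u`. -/
def covLap (A : R3 → R3) (u : R3 → ℂ) (x : R3) : ℂ :=
  lapC u x - 2 * Complex.I * (∑ k : Fin 3, (A x k : ℂ) * pdC k u x)
    - Complex.I * (divg A x : ℂ) * u x - ((∑ k : Fin 3, (A x k)^2 : ℝ) : ℂ) * u x

/-- Time derivative `∂_t` of a time-dependent complex-valued function. -/
def dtC (f : ℝ → R3 → ℂ) (t : ℝ) (x : R3) : ℂ := deriv (fun s => f s x) t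

/-- Time derivative `∂_t` of a time-dependent real-valued function. -/
def dtR (f : ℝ → R3 → ℝ) (t : ℝ) (x : R3) : ℝ := deriv (fun s => f s x) t

open Filter Topology Set Module
open scoped SchwartzMap LineDeriv

/-! ### The Coulomb potential of a Schwartz function -/

section CoulombPotential

variable {F : Type} [NormedAddCommGroup F] [NormedSpace ℝ F]

/-- The convolution of `z ↦ (4π‖z‖)⁻¹` with `g`, written with the singularity at a fixed point so
that differentiating in `x` only affects `g`. The values are vectors so that the definition applies
to the derivative of `g` as well. At `z = 0` the kernel takes the value `0`, on a null set. -/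
def coulombPotential (g : 𝓢(R3, F)) (x : R3) : F := ∫ z : R3, (4 * π * ‖z‖)⁻¹ • g (x - z)

/-- Rapid decay of the translates of a Schwartz function, with a constant uniform for `x` in a unit
ball: this provides the dominating functions for differentiation under the integral sign. -/
lemma schwartz_decay (g : 𝓢(R3, F)) (N : ℕ) (x₀ : R3) :
    ∃ C : ℝ, 0 ≤ C ∧ ∀ x ∈ Metric.ball x₀ 1, ∀ z, ‖g (x - z)‖ ≤ C * ((1 + ‖z‖) ^ N)⁻¹ := by
  set S := 2 ^ N * (Finset.Iic (N, 0)).sup (fun m => SchwartzMap.seminorm ℝ m.1 m.2) g with hS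
  have key : ∀ y, (1 + ‖y‖) ^ N * ‖g y‖ ≤ S := fun y => by
    simpa using SchwartzMap.one_add_le_sup_seminorm_apply (𝕜 := ℝ) (m := (N, 0)) (k := N) (n := 0)
      le_rfl le_rfl g y
  have hS0 : 0 ≤ S := le_trans (by positivity) (key 0)
  refine ⟨(2 + ‖x₀‖) ^ N * S, by positivity, fun x hx z => ?_⟩
  have hx' : ‖x‖ ≤ ‖x₀‖ + 1 := by
    have h1 : ‖x - x₀‖ < 1 := by simpa [dist_eq_norm] using hx
    have h2 : ‖x‖ ≤ ‖x - x₀‖ + ‖x₀‖ := by simpa using norm_add_le (x - x₀) x₀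
    linarith
  have hz : 1 + ‖z‖ ≤ (2 + ‖x₀‖) * (1 + ‖x - z‖) := by
    have h2 : ‖z‖ ≤ ‖x‖ + ‖x - z‖ := by simpa using norm_sub_le x (x - z)
    nlinarith [norm_nonneg x₀, norm_nonneg (x - z)]
  rw [← div_eq_mul_inv, le_div_iff₀ (by positivity)]
  calc ‖g (x - z)‖ * (1 + ‖z‖) ^ N
      ≤ ‖g (x - z)‖ * ((2 + ‖x₀‖) * (1 + ‖x - z‖)) ^ N := by gcongr
    _ = (2 + ‖x₀‖) ^ N * ((1 + ‖x - z‖) ^ N * ‖g (x - z)‖) := by rw [mul_pow]; ring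
    _ ≤ _ := by gcongr; exact key _

lemma integrable_weight : Integrable (fun z : R3 => ((1 + ‖z‖) ^ 4)⁻¹) := by
  have h := integrable_one_add_norm (μ := (volume : Measure R3)) (r := 4) (by
    simp [finrank_euclideanSpace]; norm_num)
  refine h.congr (ae_of_all _ fun z => ?_)
  simp only
  rw [Real.rpow_neg (by positivity)]
  norm_cast

/-- In polar coordinates the Jacobian `r²` absorbs the singularity `r⁻¹`, leaving an integrand
bounded by a multiple of `(1 + r)⁻³`. -/
lemma integrable_inv_norm_mul_weight :
    Integrable (fun z : R3 => (4 * π * ‖z‖)⁻¹ * ((1 + ‖z‖) ^ 4)⁻¹) := by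
  rw [integrable_fun_norm_addHaar (volume : Measure R3)
    (f := fun r => (4 * π * r)⁻¹ * ((1 + r) ^ 4)⁻¹)]
  have h := (integrable_one_add_norm (E := ℝ) (μ := volume) (r := 3) (by simp)).integrableOn
    (s := Ioi 0)
  refine (h.const_mul (4 * π)⁻¹).mono' (by
    apply Measurable.aestronglyMeasurable; fun_prop) ?_
  refine (ae_restrict_iff' measurableSet_Ioi).2 (ae_of_all _ fun r (hr : 0 < r) => ?_)
  rw [Real.rpow_neg (by positivity), Real.norm_of_nonneg (by simp; positivity),
    Real.norm_of_nonneg hr.le]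
  norm_cast
  simp only [finrank_euclideanSpace, Fintype.card_fin, smul_eq_mul]
  rw [← sub_nonneg]
  have : (4 * π)⁻¹ * ((1 + r) ^ 3)⁻¹ - r ^ (3 - 1) * ((4 * π * r)⁻¹ * ((1 + r) ^ 4)⁻¹)
      = (4 * π)⁻¹ * ((1 + r) ^ 4)⁻¹ := by
    field_simp; norm_num; ring
  rw [this]; positivity

lemma integrable_coulomb (g : 𝓢(R3, F)) (x : R3) :
    Integrable (fun z : R3 => (4 * π * ‖z‖)⁻¹ • g (x - z)) := by
  obtain ⟨C, -, hb⟩ := schwartz_decay g 4 x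
  refine (integrable_inv_norm_mul_weight.const_mul C).mono' ?_ (ae_of_all _ fun z => ?_)
  · apply AEStronglyMeasurable.smul
    · apply Measurable.aestronglyMeasurable; fun_prop
    · exact (g.continuous.comp (by fun_prop)).aestronglyMeasurable
  · rw [norm_smul, Real.norm_of_nonneg (by positivity)]
    calc _ ≤ (4 * π * ‖z‖)⁻¹ * (C * ((1 + ‖z‖) ^ 4)⁻¹) := by
          gcongr; exact hb x (Metric.mem_ball_self one_pos) z
      _ = _ := by ring

lemma integrable_mul_schwartz (g : 𝓢(R3, ℝ)) (x : R3) {K : R3 → ℝ} (hK : Continuous K) (A : ℝ)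
    (hA : ∀ z, |K z| ≤ A * (1 + ‖z‖) ^ 2) : Integrable (fun z : R3 => K z * g (x - z)) := by
  obtain ⟨C, hC, hb⟩ := schwartz_decay g 6 x
  refine (integrable_weight.const_mul (A * C)).mono' ?_ (ae_of_all _ fun z => ?_)
  · exact (hK.mul (g.continuous.comp (by fun_prop))).aestronglyMeasurable
  · rw [norm_mul]
    calc _ ≤ (A * (1 + ‖z‖) ^ 2) * (C * ((1 + ‖z‖) ^ 6)⁻¹) := by
          gcongr
          · exact (abs_nonneg _).trans (hA z)
          · exact hA z
          · exact hb x (Metric.mem_ball_self one_pos) z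
      _ = _ := by field_simp

/-- The derivative falls on `g`, so that the derivative of a Coulomb potential is again a Coulomb
potential; this is what makes smoothness an induction. -/
lemma hasFDerivAt_coulombPotential (g : 𝓢(R3, F)) (x : R3) :
    HasFDerivAt (coulombPotential g)
      (coulombPotential (SchwartzMap.fderivCLM ℝ R3 F g) x) x := by
  obtain ⟨C, -, hb⟩ := schwartz_decay (SchwartzMap.fderivCLM ℝ R3 F g) 4 x
  refine hasFDerivAt_integral_of_dominated_of_fderiv_le
    (F' := fun x z => (4 * π * ‖z‖)⁻¹ • SchwartzMap.fderivCLM ℝ R3 F g (x - z))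
    (bound := fun z => C * ((4 * π * ‖z‖)⁻¹ * ((1 + ‖z‖) ^ 4)⁻¹))
    (Metric.ball_mem_nhds x one_pos)
    (Eventually.of_forall fun y => (integrable_coulomb g y).aestronglyMeasurable)
    (integrable_coulomb g x) (integrable_coulomb _ x).aestronglyMeasurable
    (ae_of_all _ fun z y hy => ?_) (integrable_inv_norm_mul_weight.const_mul C)
    (ae_of_all _ fun z y _ => ?_)
  · rw [norm_smul, Real.norm_of_nonneg (by positivity)]
    calc _ ≤ (4 * π * ‖z‖)⁻¹ * (C * ((1 + ‖z‖) ^ 4)⁻¹) := by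
          gcongr; exact hb y hy z
      _ = _ := by ring
  · have h := (g.differentiableAt (x := y - z)).hasFDerivAt
    have h2 := h.comp y ((hasFDerivAt_id y).sub_const z)
    rw [ContinuousLinearMap.comp_id] at h2
    exact h2.const_smul (4 * π * ‖z‖)⁻¹

lemma contDiff_coulombPotential (n : ℕ) :
    ∀ {F : Type} [NormedAddCommGroup F] [NormedSpace ℝ F] (g : 𝓢(R3, F)),
      ContDiff ℝ n (coulombPotential g) := by
  induction n with
  | zero =>
    intro F _ _ g
    exact contDiff_zero.2 (continuous_iff_continuousAt.2 fun x =>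
      (hasFDerivAt_coulombPotential g x).continuousAt)
  | succ n ih =>
    intro F _ _ g
    exact contDiff_succ_iff_hasFDerivAt.2 ⟨_, ih _, hasFDerivAt_coulombPotential g⟩

lemma fderiv_coulombPotential_apply (g : 𝓢(R3, ℝ)) (v x : R3) :
    fderiv ℝ (coulombPotential g) x v = coulombPotential (∂_{v} g) x := by
  rw [(hasFDerivAt_coulombPotential g x).fderiv, coulombPotential,
    ContinuousLinearMap.integral_apply (integrable_coulomb _ x)]
  simp [coulombPotential, SchwartzMap.lineDerivOp_apply_eq_fderiv]

end CoulombPotential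

/-! ### The regularized kernel and integration by parts -/

section Regularization

/-- The smooth function `√(1 + c²‖z‖²)`. For large `c`, the quotient `c / japanese c z` is a
regularization of `1 / ‖z‖`. -/
def japanese (c : ℝ) (z : R3) : ℝ := √(1 + c ^ 2 * ‖z‖ ^ 2)

lemma japanese_pos (c : ℝ) (z : R3) : 0 < japanese c z := Real.sqrt_pos.2 (by positivity)

lemma one_le_japanese (c : ℝ) (z : R3) : 1 ≤ japanese c z :=
  Real.one_le_sqrt.2 (by nlinarith [sq_nonneg (c * ‖z‖)])

lemma japanese_sq (c : ℝ) (z : R3) : japanese c z ^ 2 = 1 + c ^ 2 * ‖z‖ ^ 2 :=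
  Real.sq_sqrt (by positivity)

lemma continuous_japanese (c : ℝ) : Continuous (japanese c) := by
  unfold japanese; fun_prop

lemma hasLineDerivAt_japanese (c : ℝ) (z : R3) (k : Fin 3) :
    HasLineDerivAt ℝ (japanese c) (c ^ 2 * z k / japanese c z) z (EuclideanSpace.single k 1) := by
  unfold HasLineDerivAt
  have h1 : HasDerivAt (fun t : ℝ => z + t • EuclideanSpace.single k (1 : ℝ))
      (EuclideanSpace.single k (1 : ℝ)) 0 := by
    simpa using ((hasDerivAt_id (0 : ℝ)).smul_const (EuclideanSpace.single k (1 : ℝ))).const_add z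
  have h2 := ((h1.norm_sq.const_mul (c ^ 2)).const_add 1).sqrt (by positivity)
  refine HasDerivAt.congr_deriv h2 ?_
  simp only [japanese, zero_smul, add_zero, EuclideanSpace.inner_single_right]
  simp
  field_simp

lemma hasLineDerivAt_coord (z : R3) (k : Fin 3) :
    HasLineDerivAt ℝ (fun z : R3 => z k) 1 z (EuclideanSpace.single k 1) := by
  unfold HasLineDerivAt
  simpa using (hasDerivAt_id (0 : ℝ)).const_add (z k)

/-- First partial derivative of the regularized kernel. -/
lemma hasLineDerivAt_kernel (c : ℝ) (z : R3) (k : Fin 3) :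
    HasLineDerivAt ℝ (fun z => c / japanese c z) (-(c ^ 3 * z k) / japanese c z ^ 3) z
      (EuclideanSpace.single k 1) := by
  have hp := (japanese_pos c z).ne'
  have h : HasDerivAt _ _ _ := hasLineDerivAt_japanese c z k
  have h2 := (hasDerivAt_const (0 : ℝ) c).div h (by simpa using hp)
  unfold HasLineDerivAt
  refine HasDerivAt.congr_deriv h2 ?_
  simp
  field_simp

/-- Second partial derivative of the regularized kernel. -/
lemma hasLineDerivAt_kernel' (c : ℝ) (z : R3) (k : Fin 3) :
    HasLineDerivAt ℝ (fun z : R3 => -(c ^ 3 * z k) / japanese c z ^ 3)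
      (-c ^ 3 * (1 / japanese c z ^ 3 - 3 * c ^ 2 * z k ^ 2 / japanese c z ^ 5)) z
      (EuclideanSpace.single k 1) := by
  have hp := (japanese_pos c z).ne'
  have h : HasDerivAt _ _ _ := hasLineDerivAt_japanese c z k
  have h1 : HasDerivAt _ _ _ := hasLineDerivAt_coord z k
  have h2 := (h1.const_mul (c ^ 3)).neg.div (h.pow 3) (by simpa using hp)
  unfold HasLineDerivAt
  refine HasDerivAt.congr_deriv h2 ?_
  simp
  field_simp
  ring

lemma hasLineDerivAt_reflect (g : 𝓢(R3, ℝ)) (x z v : R3) :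
    HasLineDerivAt ℝ (fun z => g (x - z)) (-(∂_{v} g (x - z))) z v := by
  have h := (g.differentiableAt (x := x - z)).hasFDerivAt.comp z ((hasFDerivAt_id z).const_sub x)
  have h2 := h.hasLineDerivAt v
  rw [SchwartzMap.lineDerivOp_apply_eq_fderiv]
  simpa [Function.comp_def] using h2

/-- The reflection `z ↦ x - z` contributes a sign that cancels the one from integrating by parts. -/
lemma integral_kernel_by_parts {K K' : R3 → ℝ} (g : 𝓢(R3, ℝ)) (x v : R3)
    (hK : Continuous K) (hK' : Continuous K') (A : ℝ)
    (hA : ∀ z, |K z| ≤ A * (1 + ‖z‖) ^ 2) (hA' : ∀ z, |K' z| ≤ A * (1 + ‖z‖) ^ 2)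
    (hd : ∀ z, HasLineDerivAt ℝ K (K' z) z v) :
    ∫ z, K z * (∂_{v} g) (x - z) = ∫ z, K' z * g (x - z) := by
  have := integral_bilinear_hasLineDerivAt_right_eq_neg_left_of_integrable (μ := volume)
    (f := K) (f' := K') (g := fun z => g (x - z)) (g' := fun z => -(∂_{v} g (x - z))) (v := v)
    (B := ContinuousLinearMap.mul ℝ ℝ)
    (by simpa using integrable_mul_schwartz g x hK' A hA')
    (by simpa using (integrable_mul_schwartz (∂_{v} g) x hK A hA).neg)
    (by simpa using integrable_mul_schwartz g x hK A hA)
    (fun z _ => hd z) (fun z _ => hasLineDerivAt_reflect g x z v)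
  simpa [integral_neg] using this

lemma abs_coord_le (z : R3) (k : Fin 3) : |z k| ≤ ‖z‖ := by
  simpa using PiLp.norm_apply_le z k

/-- Two integrations by parts move `∂ₖ²` from `f` onto the regularized kernel. The resulting
integrals are shown to be integrable so that they can be summed over `k`. -/
lemma integral_kernel_second (f : 𝓢(R3, ℝ)) (x : R3) (k : Fin 3) {c : ℝ} (hc : 0 < c) :
    Integrable (fun z => (-c ^ 3 * (1 / japanese c z ^ 3 - 3 * c ^ 2 * z k ^ 2 / japanese c z ^ 5))
        * f (x - z)) ∧
    ∫ z, (c / japanese c z) *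
        (∂_{EuclideanSpace.single k (1 : ℝ)} (∂_{EuclideanSpace.single k (1 : ℝ)} f)) (x - z) =
      ∫ z, (-c ^ 3 * (1 / japanese c z ^ 3 - 3 * c ^ 2 * z k ^ 2 / japanese c z ^ 5))
        * f (x - z) := by
  have hj := continuous_japanese c
  have hp := fun z => (japanese_pos c z).ne'
  have hn : ∀ n : ℕ, ∀ z, 1 ≤ japanese c z ^ n := fun n z => one_le_pow₀ (one_le_japanese c z)
  have hk : Continuous fun z : R3 => z k := by fun_prop
  have c0 : Continuous fun z => c / japanese c z := continuous_const.div hj hp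
  have c1 : Continuous fun z : R3 => -(c ^ 3 * z k) / japanese c z ^ 3 :=
    (by fun_prop : Continuous fun z : R3 => -(c ^ 3 * z k)).div (hj.pow 3)
      fun z => pow_ne_zero _ (hp z)
  have c2 : Continuous fun z : R3 =>
      -c ^ 3 * (1 / japanese c z ^ 3 - 3 * c ^ 2 * z k ^ 2 / japanese c z ^ 5) :=
    continuous_const.mul ((continuous_const.div (hj.pow 3) fun z => pow_ne_zero _ (hp z)).sub
      ((by fun_prop : Continuous fun z : R3 => 3 * c ^ 2 * z k ^ 2).div (hj.pow 5)
        fun z => pow_ne_zero _ (hp z)))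
  have b0 : ∀ z, |c / japanese c z| ≤ (c + c ^ 3) * (1 + ‖z‖) ^ 2 := fun z => by
    rw [abs_of_nonneg (div_nonneg hc.le (japanese_pos c z).le)]
    calc _ ≤ c := div_le_self hc.le (one_le_japanese c z)
      _ = c * 1 := by ring
      _ ≤ (c + c ^ 3) * (1 + ‖z‖) ^ 2 := by
        gcongr
        · linarith [pow_pos hc 3]
        · exact one_le_pow₀ (by linarith [norm_nonneg z])
  have b1 : ∀ A, c ^ 3 ≤ A → ∀ z : R3,
      |-(c ^ 3 * z k) / japanese c z ^ 3| ≤ A * (1 + ‖z‖) ^ 2 := fun A hcA z => by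
    rw [abs_div, abs_neg, abs_mul, abs_of_pos (pow_pos hc 3), abs_of_pos (pow_pos (japanese_pos c z) 3)]
    calc _ ≤ c ^ 3 * |z k| := div_le_self (by positivity) (hn 3 z)
      _ ≤ A * (1 + ‖z‖) ^ 2 := by
        gcongr
        · exact le_trans (by positivity) hcA
        · nlinarith [abs_coord_le z k, norm_nonneg z]
  have b2 : ∀ z : R3,
      |-c ^ 3 * (1 / japanese c z ^ 3 - 3 * c ^ 2 * z k ^ 2 / japanese c z ^ 5)|
        ≤ (c ^ 3 * (1 + 3 * c ^ 2)) * (1 + ‖z‖) ^ 2 := fun z => by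
    rw [abs_mul, abs_neg, abs_of_pos (pow_pos hc 3), mul_assoc (c ^ 3)]
    refine mul_le_mul_of_nonneg_left ?_ (pow_pos hc 3).le
    have h1 : 0 ≤ 1 / japanese c z ^ 3 := by have := japanese_pos c z; positivity
    have h1' : 1 / japanese c z ^ 3 ≤ 1 := div_le_self zero_le_one (hn 3 z)
    have h2 : 0 ≤ 3 * c ^ 2 * z k ^ 2 / japanese c z ^ 5 := by
      have := japanese_pos c z; positivity
    have h2' : 3 * c ^ 2 * z k ^ 2 / japanese c z ^ 5 ≤ 3 * c ^ 2 * z k ^ 2 :=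
      div_le_self (by positivity) (hn 5 z)
    have h3 : z k ^ 2 ≤ ‖z‖ ^ 2 := sq_le_sq.2 (by simpa using abs_coord_le z k)
    have h4 : c ^ 2 * z k ^ 2 ≤ c ^ 2 * ‖z‖ ^ 2 := by gcongr
    have h5 : 0 ≤ c ^ 2 * ‖z‖ := by positivity
    rw [abs_le]
    constructor <;> nlinarith [norm_nonneg z, sq_nonneg c, sq_nonneg ‖z‖]
  refine ⟨integrable_mul_schwartz f x c2 _ b2, ?_⟩
  rw [integral_kernel_by_parts (∂_{EuclideanSpace.single k (1 : ℝ)} f) x _ c0 c1 (c + c ^ 3) b0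
      (b1 _ (by linarith)) (fun z => hasLineDerivAt_kernel c z k),
    integral_kernel_by_parts f x _ c1 c2 (c ^ 3 * (1 + 3 * c ^ 2))
      (b1 _ (by nlinarith [pow_pos hc 3, pow_pos hc 2])) b2
      (fun z => hasLineDerivAt_kernel' c z k)]

/-! ### The two limits as the regularization is removed -/

/-- The regularized kernels are dominated by, and converge to, the Coulomb kernel. -/
lemma tendsto_integral_kernel (g : 𝓢(R3, ℝ)) (x : R3) :
    Tendsto (fun c : ℝ => ∫ z, (4 * π)⁻¹ * (c / japanese c z * g (x - z))) atTop
      (𝓝 (coulombPotential g x)) := by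
  refine tendsto_integral_filter_of_dominated_convergence
    (fun z => ‖(4 * π * ‖z‖)⁻¹ • g (x - z)‖) ?_ ?_ (integrable_coulomb g x).norm ?_
  · refine Eventually.of_forall fun c => Continuous.aestronglyMeasurable ?_
    exact continuous_const.mul ((continuous_const.div (continuous_japanese c)
      fun z => (japanese_pos c z).ne').mul (g.continuous.comp (by fun_prop)))
  · filter_upwards [eventually_gt_atTop 0] with c hc
    filter_upwards [Measure.ae_ne volume (0 : R3)] with z hz
    have hz' : 0 < ‖z‖ := norm_pos_iff.2 hz
    have hp := japanese_pos c z
    have : c * ‖z‖ ≤ japanese c z := Real.le_sqrt_of_sq_le (by nlinarith)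
    rw [norm_smul, ← mul_assoc, norm_mul,
      Real.norm_of_nonneg (by positivity : 0 ≤ (4 * π)⁻¹ * (c / japanese c z)),
      Real.norm_of_nonneg (by positivity : 0 ≤ (4 * π * ‖z‖)⁻¹), mul_inv (4 * π)]
    refine mul_le_mul_of_nonneg_right (mul_le_mul_of_nonneg_left ?_
      (by positivity : 0 ≤ (4 * π)⁻¹)) (norm_nonneg _)
    rw [div_le_iff₀ hp, inv_mul_eq_div, le_div_iff₀ hz']
    exact this
  · filter_upwards [Measure.ae_ne volume (0 : R3)] with z hz
    have hz' : 0 < ‖z‖ := norm_pos_iff.2 hz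
    have h1 : Tendsto (fun c : ℝ => (√((c⁻¹) ^ 2 + ‖z‖ ^ 2))⁻¹) atTop (𝓝 ‖z‖⁻¹) := by
      have h := (((tendsto_inv_atTop_zero (𝕜 := ℝ)).pow 2).add_const (‖z‖ ^ 2)).sqrt
      have h' := h.inv₀ (by simpa using hz)
      simpa using h'
    have h2 : Tendsto (fun c : ℝ => c / japanese c z) atTop (𝓝 ‖z‖⁻¹) := by
      refine h1.congr' ?_
      filter_upwards [eventually_gt_atTop 0] with c hc
      have : japanese c z = c * √((c⁻¹) ^ 2 + ‖z‖ ^ 2) := by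
        rw [japanese, ← Real.sqrt_sq hc.le, ← Real.sqrt_mul (by positivity), Real.sqrt_sq hc.le]
        congr 1; field_simp
      rw [this]; field_simp
    have := (h2.mul_const (g (x - z))).const_mul (4 * π)⁻¹
    rw [smul_eq_mul, mul_inv (4 * π), mul_assoc (4 * π)⁻¹]
    exact this

lemma tendsto_div_sqrt : Tendsto (fun r : ℝ => r / √(1 + r ^ 2)) atTop (𝓝 1) := by
  have h := ((((tendsto_inv_atTop_zero (𝕜 := ℝ)).pow 2).add_const 1).sqrt).inv₀ (by simp)
  simp only [ne_eq, OfNat.ofNat_ne_zero, not_false_eq_true, zero_pow, zero_add, Real.sqrt_one,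
    inv_one] at h
  refine h.congr' ?_
  filter_upwards [eventually_gt_atTop 0] with r hr
  have : √(1 + r ^ 2) = r * √((r⁻¹) ^ 2 + 1) := by
    rw [← Real.sqrt_sq hr.le, ← Real.sqrt_mul (by positivity), Real.sqrt_sq hr.le]
    congr 1; field_simp
  rw [this]; field_simp

/-- The Laplacian of the regularized kernel at `c = 1` is, up to the factor `-4π`, a probability
density: its radial part has the primitive `(r / √(1 + r²))³`. -/
lemma integral_bump : ∫ z : R3, 3 / (4 * π) / √(1 + ‖z‖ ^ 2) ^ 5 = 1 := by
  rw [integral_fun_norm_addHaar volume (fun r : ℝ => 3 / (4 * π) / √(1 + r ^ 2) ^ 5)]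
  have hd : ∀ r ∈ Ici (0 : ℝ), HasDerivAt (fun r : ℝ => (4 * π)⁻¹ * (r / √(1 + r ^ 2)) ^ 3)
      (r ^ (3 - 1) • (3 / (4 * π) / √(1 + r ^ 2) ^ 5)) r := fun r _ => by
    have hs : 0 < √(1 + r ^ 2) := Real.sqrt_pos.2 (by positivity)
    have h1 : HasDerivAt (fun r : ℝ => √(1 + r ^ 2)) (2 * r / (2 * √(1 + r ^ 2))) r := by
      simpa using ((hasDerivAt_pow 2 r).const_add 1).sqrt (by positivity)
    have h2 := ((((hasDerivAt_id r).div h1 hs.ne').pow 3).const_mul (4 * π)⁻¹)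
    refine HasDerivAt.congr_deriv h2 ?_
    have hs2 : √(1 + r ^ 2) ^ 2 = 1 + r ^ 2 := Real.sq_sqrt (by positivity)
    simp only [id, smul_eq_mul, Pi.div_apply]
    generalize √(1 + r ^ 2) = s at hs hs2 ⊢
    push_cast
    field_simp
    linear_combination r ^ 2 * hs2
  have hlim := (tendsto_div_sqrt.pow 3).const_mul (4 * π)⁻¹
  have h := integral_Ioi_of_hasDerivAt_of_nonneg' hd (fun r (hr : 0 < r) => by
    rw [smul_eq_mul]; positivity) hlim
  simp only [finrank_euclideanSpace, Fintype.card_fin]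
  rw [h, Measure.real, EuclideanSpace.volume_ball_fin_three]
  simp [ENNReal.toReal_ofReal (by positivity : 0 ≤ π * 4 / 3)]
  field_simp

/-- The rescaled densities form an approximate identity. -/
lemma tendsto_integral_bump (f : 𝓢(R3, ℝ)) (x : R3) :
    Tendsto (fun c : ℝ => ∫ z : R3,
      (c ^ 3 * (3 / (4 * π) / japanese c z ^ 5)) * f (x - z)) atTop (𝓝 (f x)) := by
  have h := tendsto_integral_comp_smul_smul_of_integrable (μ := (volume : Measure R3))
    (φ := fun z => 3 / (4 * π) / √(1 + ‖z‖ ^ 2) ^ 5) (fun z => by positivity) integral_bump ?_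
    (g := fun z => f (x - z)) (f.integrable.comp_sub_left x)
    (f.continuous.comp (by fun_prop)).continuousAt
  · simpa [finrank_euclideanSpace, japanese, norm_smul, mul_pow] using h
  · have h0 : Tendsto (fun z : R3 => 3 / (4 * π) * ‖z‖⁻¹) (Bornology.cobounded R3) (𝓝 0) := by
      simpa using ((tendsto_inv_atTop_zero (𝕜 := ℝ)).comp
        (tendsto_norm_cobounded_atTop (E := R3))).const_mul (3 / (4 * π))
    refine squeeze_zero (fun z => by positivity) (fun z => ?_) h0
    rcases eq_or_ne z 0 with rfl | hz
    · simp [finrank_euclideanSpace]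
    have hr : 0 < ‖z‖ := norm_pos_iff.2 hz
    rw [finrank_euclideanSpace, Fintype.card_fin]
    set r := ‖z‖
    have hs2 : √(1 + r ^ 2) ^ 2 = 1 + r ^ 2 := Real.sq_sqrt (by positivity)
    have hs : 0 < √(1 + r ^ 2) := Real.sqrt_pos.2 (by positivity)
    have h1 : 1 ≤ √(1 + r ^ 2) := Real.one_le_sqrt.2 (by nlinarith)
    have : r ^ 4 ≤ √(1 + r ^ 2) ^ 5 := by
      calc r ^ 4 ≤ (√(1 + r ^ 2) ^ 2) ^ 2 := by rw [hs2]; nlinarith [sq_nonneg r]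
        _ = √(1 + r ^ 2) ^ 4 := by ring
        _ ≤ _ := pow_le_pow_right₀ h1 (by norm_num)
    rw [mul_div_assoc', mul_comm (r ^ 3), mul_div_assoc]
    gcongr
    rw [div_le_iff₀ (by positivity), inv_mul_eq_div, le_div_iff₀ hr]
    linarith [this, (by ring : r ^ 3 * r = r ^ 4)]

/-- The Coulomb potential of the Laplacian of `f` is `-f`, by uniqueness of the limit as `c → ∞`. -/
lemma sum_coulombPotential (f : 𝓢(R3, ℝ)) (x : R3) :
    ∑ k : Fin 3, coulombPotential
      (∂_{EuclideanSpace.single k (1 : ℝ)} (∂_{EuclideanSpace.single k (1 : ℝ)} f)) x = -f x := by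
  have h1 := tendsto_finsetSum (Finset.univ : Finset (Fin 3)) fun k _ => tendsto_integral_kernel
    (∂_{EuclideanSpace.single k (1 : ℝ)} (∂_{EuclideanSpace.single k (1 : ℝ)} f)) x
  refine tendsto_nhds_unique h1 ((tendsto_integral_bump f x).neg.congr' ?_)
  filter_upwards [eventually_gt_atTop 0] with c hc
  simp_rw [integral_const_mul]
  rw [← Finset.mul_sum, Finset.sum_congr rfl fun k _ => (integral_kernel_second f x k hc).2,
    ← integral_finsetSum _ fun k _ => (integral_kernel_second f x k hc).1, ← integral_const_mul,
    ← integral_neg]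
  congr 1 with z
  -- Summing over `k` gives `3/s³ - 3c²‖z‖²/s⁵ = 3/s⁵` with `s = japanese c z`,
  -- because `s² = 1 + c²‖z‖²`.
  have hp := (japanese_pos c z)
  have hs := japanese_sq c z
  rw [EuclideanSpace.norm_sq_eq, Fin.sum_univ_three] at hs
  simp only [Real.norm_eq_abs, sq_abs] at hs
  rw [Fin.sum_univ_three]
  generalize japanese c z = s at *
  field_simp
  linear_combination (3 * f (x - z)) * hs

end Regularization

/-! ### Poisson equation -/

/-- the Coulomb potential `A_e = (4π|x|)⁻¹ ⋆ f` of a Schwartz function `f`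
is well defined (the integral converges absolutely for every `x`), is smooth on `ℝ³`,
and satisfies `−ΔA_e = f` pointwise. -/
theorem coulomb_potential_solves_poisson (f : SchwartzMap R3 ℝ) :
    (∀ x : R3, Integrable (fun y : R3 => f y / (4 * π * ‖x - y‖))) ∧
    ContDiff ℝ (⊤ : ℕ∞) (fun x : R3 => ∫ y : R3, f y / (4 * π * ‖x - y‖)) ∧
    (∀ x : R3, - lapR (fun z : R3 => ∫ y : R3, f y / (4 * π * ‖z - y‖)) x = f x) := by
  -- Translation and reflection invariance of Lebesgue measure.
  have hU : (fun x : R3 => ∫ y : R3, f y / (4 * π * ‖x - y‖)) = coulombPotential f := by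
    funext x
    rw [coulombPotential, ← integral_sub_left_eq_self _ volume x]
    simp [div_eq_inv_mul]
  refine ⟨fun x => ?_, ?_, fun x => ?_⟩
  · have h := (integrable_coulomb f x).comp_sub_left x
    simpa [div_eq_inv_mul] using h
  · rw [hU]
    exact contDiff_infty.2 fun n => contDiff_coulombPotential n f
  · have hpd : ∀ (k : Fin 3) (g : 𝓢(R3, ℝ)), pdR k (coulombPotential g) =
        coulombPotential (∂_{EuclideanSpace.single k (1 : ℝ)} g) := fun k g =>
      funext fun y => fderiv_coulombPotential_apply g _ y
    rw [hU, lapR]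
    simp_rw [hpd]
    rw [sum_coulombPotential, neg_neg]
end
end

section
/- Equivalence of the decay assumptions on A₀ and on B₀: Let A₀ : [1,∞) × ℝ³ → ℝ³ be of class C¹ and define B₀(t,x) = −t^{−1} A₀(1/t, x/t) for t ∈ (0,1], x ∈ ℝ³. Let S = t∂_t + x·∇ + 1 and B̌₀(t,x) = t^{−1} x·B₀(t,x). Then the following are equivalent: (i) there is a constant C such that for all t ∈ (0,1] and all j, k ≥ 0 with j + k ≤ 1, ‖∇^k (t∂_t)^j B₀(t,·)‖_∞ + ‖∇^k B̌₀(t,·)‖_∞ ≤ C t^{−k}; (ii) there is a constant C' such that for all t ∈ [1,∞) and all j, k ≥ 0 with j + k ≤ 1, ‖∇^k S^j A₀(t,·)‖_∞ + ‖∇^k (x·A₀)(t,·)‖_∞ ≤ C' t^{−1}. -/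
/-!
For fixed `t > 0` put `τ = t⁻¹`.  With `g(τ, z) = z · A₀(τ, z)`, the definition of `B₀` and the
chain rule give

* `B₀(t, x) = -τ A₀(τ, τ x)` and `t⁻¹ x · B₀(t, x) = -τ g(τ, τ x)`;
* `t ∂ₜ B₀(t, x) = τ (S A₀)(τ, τ x)`, because `t ∂ₜ = -τ ∂_τ`, and differentiating the prefactor `τ`
  and the argument `τ x` produces the terms `+ 1` and `x · ∇` of `S`
  (`smul_deriv_inversion`);
* `∇B₀(t, x) = -τ² ∇A₀(τ, τ x)` and `∇(t⁻¹ x · B₀)(t, x) = -τ² ∇g(τ, τ x)`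
  (`norm_fderiv_rescale`).

As `x ↦ τ x` is a bijection of `ℝ³`, the bounds on `B₀` at time `t` with constant `C` are the bounds
on `A₀` at time `τ` with the same `C`; and `t ↦ t⁻¹` exchanges `(0, 1]` and `[1, ∞)`.
-/


noncomputable section
open MeasureTheory Real
open scoped RealInnerProductSpace

lemma forall_forall_smul_iff {c : ℝ} (hc : c ≠ 0) {P : R3 → R3 → Prop} :
    (∀ x y, P (c • x) (c • y)) ↔ ∀ x y, P x y := by
  refine ⟨fun h x y => ?_, fun h x y => h _ _⟩
  simpa [smul_smul, hc] using h (c⁻¹ • x) (c⁻¹ • y)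

/-- The spatial gradient of `x ↦ -c f(c x)` is `c²` times that of `f` at `c x`, in norm.
No differentiability is needed, since dilations preserve the junk value `0` of `fderiv`. -/
lemma norm_fderiv_rescale {F : Type*} [NormedAddCommGroup F] [NormedSpace ℝ F]
    (c : ℝ) (f : R3 → F) (x : R3) :
    ‖fderiv ℝ (fun z => -c • f (c • z)) x‖ = c * (c * ‖fderiv ℝ f (c • x)‖) := by
  have h : fderiv ℝ (fun z => -c • f (c • z)) x = -c • c • fderiv ℝ f (c • x) := by
    rw [← fderiv_comp_smul]
    exact congrFun (fderiv_const_smul_field (-c)) x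
  rw [h, norm_smul, norm_smul, ← mul_assoc, ← mul_assoc]
  simp

/-- The inversion `(t, x) ↦ (t⁻¹, t⁻¹ x)` turns `t ∂ₜ` acting on `-t⁻¹ A(t⁻¹, t⁻¹ x)` into
`S = τ ∂_τ + z · ∇ + 1` acting on `A` at `τ = t⁻¹`, `z = t⁻¹ x`. -/
lemma smul_deriv_inversion {A : ℝ → R3 → R3}
    (hA : Differentiable ℝ (fun p : ℝ × R3 => A p.1 p.2)) {t : ℝ} (ht : t ≠ 0) (x : R3) :
    t • deriv (fun s => -s⁻¹ • A s⁻¹ (s⁻¹ • x)) t =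
      t⁻¹ • (t⁻¹ • deriv (fun s => A s (t⁻¹ • x)) t⁻¹
        + fderiv ℝ (A t⁻¹) (t⁻¹ • x) (t⁻¹ • x) + A t⁻¹ (t⁻¹ • x)) := by
  set τ := t⁻¹ with hτ
  set L := fderiv ℝ (fun p : ℝ × R3 => A p.1 p.2) (τ, τ • x) with hL
  have hF : HasFDerivAt (fun p : ℝ × R3 => A p.1 p.2) L (τ, τ • x) := (hA _).hasFDerivAt
  have h1 : deriv (fun s => A s (τ • x)) τ = L (1, 0) :=
    (HasFDerivAt.comp_hasDerivAt (f := fun s => (s, τ • x)) τ hF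
      ((hasDerivAt_id τ).prodMk (hasDerivAt_const τ (τ • x)))).deriv
  have h2 : fderiv ℝ (A τ) (τ • x) (τ • x) = L (0, τ • x) := by
    have h : HasFDerivAt (A τ) (L.comp (ContinuousLinearMap.inr ℝ ℝ R3)) (τ • x) :=
      HasFDerivAt.comp (τ • x) hF (hasFDerivAt_prodMk_right τ (τ • x))
    rw [h.fderiv, ContinuousLinearMap.comp_apply, ContinuousLinearMap.inr_apply]
  have hi : HasDerivAt (fun s : ℝ => s⁻¹) (-(t ^ 2)⁻¹) t := hasDerivAt_inv ht
  have h3 : HasDerivAt (fun s : ℝ => A s⁻¹ (s⁻¹ • x))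
      (L (-(t ^ 2)⁻¹, -(t ^ 2)⁻¹ • x)) t :=
    HasFDerivAt.comp_hasDerivAt (f := fun s => (s⁻¹, s⁻¹ • x)) t hF (hi.prodMk (hi.smul_const x))
  have h4 : deriv (fun s => -s⁻¹ • A s⁻¹ (s⁻¹ • x)) t =
      -t⁻¹ • L (-(t ^ 2)⁻¹, -(t ^ 2)⁻¹ • x) + (- -(t ^ 2)⁻¹) • A t⁻¹ (t⁻¹ • x) :=
    (hi.neg.smul h3).deriv
  have h5 : L (-(t ^ 2)⁻¹, -(t ^ 2)⁻¹ • x) = -(t ^ 2)⁻¹ • L (1, 0) - τ • L (0, τ • x) := by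
    rw [← map_smul, ← map_smul, ← map_sub]
    congr 1
    ext1
    · simp
    · simp [smul_smul, hτ, pow_two]
  rw [h4, h1, h2, h5]
  simp only [hτ]
  match_scalars <;> field_simp

/-- The bounds on `B₀` at time `t` are the bounds on `A₀` at time `t⁻¹`, with the same constant. -/
lemma decay_at_time_iff {A₀ B₀ : ℝ → R3 → R3}
    (hA : Differentiable ℝ (fun p : ℝ × R3 => A₀ p.1 p.2))
    (hB₀ : ∀ t x, B₀ t x = -t⁻¹ • A₀ t⁻¹ (t⁻¹ • x)) {t : ℝ} (ht : 0 < t) (C : ℝ) :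
    ((∀ x y : R3, ‖B₀ t x‖ + |t⁻¹ * ⟪y, B₀ t y⟫| ≤ C) ∧
      (∀ x y : R3, ‖t • deriv (fun s => B₀ s x) t‖ + |t⁻¹ * ⟪y, B₀ t y⟫| ≤ C) ∧
      (∀ x y : R3, ‖fderiv ℝ (fun z => B₀ t z) x‖
          + ‖fderiv ℝ (fun z => t⁻¹ * ⟪z, B₀ t z⟫) y‖ ≤ C * t⁻¹)) ↔
    ((∀ x y : R3, ‖A₀ t⁻¹ x‖ + |⟪y, A₀ t⁻¹ y⟫| ≤ C * t⁻¹⁻¹) ∧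
      (∀ x y : R3, ‖t⁻¹ • deriv (fun s => A₀ s x) t⁻¹ + fderiv ℝ (A₀ t⁻¹) x x + A₀ t⁻¹ x‖
          + |⟪y, A₀ t⁻¹ y⟫| ≤ C * t⁻¹⁻¹) ∧
      (∀ x y : R3, ‖fderiv ℝ (A₀ t⁻¹) x‖
          + ‖fderiv ℝ (fun z => (⟪z, A₀ t⁻¹ z⟫ : ℝ)) y‖ ≤ C * t⁻¹⁻¹)) := by
  have hτ : 0 < t⁻¹ := inv_pos.2 ht
  have hn (v : R3) : ‖t⁻¹ • v‖ = t⁻¹ * ‖v‖ := by rw [norm_smul, Real.norm_of_nonneg hτ.le]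
  have hB (x : R3) : ‖B₀ t x‖ = t⁻¹ * ‖A₀ t⁻¹ (t⁻¹ • x)‖ := by
    rw [hB₀, neg_smul, norm_neg, hn]
  have hg (y : R3) : t⁻¹ * ⟪y, B₀ t y⟫ = -t⁻¹ • ⟪t⁻¹ • y, A₀ t⁻¹ (t⁻¹ • y)⟫ := by
    rw [hB₀, real_inner_smul_left, real_inner_smul_right, smul_eq_mul]
    ring
  have hg' (y : R3) : |t⁻¹ * ⟪y, B₀ t y⟫| = t⁻¹ * |⟪t⁻¹ • y, A₀ t⁻¹ (t⁻¹ • y)⟫| := by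
    rw [hg, smul_eq_mul, abs_mul, abs_neg, abs_of_pos hτ]
  have hdt (x : R3) : ‖t • deriv (fun s => B₀ s x) t‖ =
      t⁻¹ * ‖t⁻¹ • deriv (fun s => A₀ s (t⁻¹ • x)) t⁻¹
        + fderiv ℝ (A₀ t⁻¹) (t⁻¹ • x) (t⁻¹ • x) + A₀ t⁻¹ (t⁻¹ • x)‖ := by
    simp only [hB₀]
    rw [smul_deriv_inversion hA ht.ne', hn]
  have hdB (x : R3) : ‖fderiv ℝ (fun z => B₀ t z) x‖ =
      t⁻¹ * (t⁻¹ * ‖fderiv ℝ (A₀ t⁻¹) (t⁻¹ • x)‖) := by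
    simp only [hB₀]
    exact norm_fderiv_rescale _ _ _
  have hdg (y : R3) : ‖fderiv ℝ (fun z => t⁻¹ * ⟪z, B₀ t z⟫) y‖ =
      t⁻¹ * (t⁻¹ * ‖fderiv ℝ (fun z => (⟪z, A₀ t⁻¹ z⟫ : ℝ)) (t⁻¹ • y)‖) := by
    simp only [hg]
    exact norm_fderiv_rescale t⁻¹ (fun z => (⟪z, A₀ t⁻¹ z⟫ : ℝ)) y
  have e1 (a b : ℝ) : t⁻¹ * a + t⁻¹ * b ≤ C ↔ a + b ≤ C * t⁻¹⁻¹ := by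
    rw [← mul_add, ← div_eq_mul_inv, le_div_iff₀ hτ, mul_comm]
  have e2 (a b : ℝ) : t⁻¹ * (t⁻¹ * a) + t⁻¹ * (t⁻¹ * b) ≤ C * t⁻¹ ↔ a + b ≤ C * t⁻¹⁻¹ := by
    rw [← mul_add, mul_comm C, mul_le_mul_iff_right₀ hτ, e1]
  simp only [hB, hg', hdt, hdB, hdg, e1, e2]
  -- Both sides now agree up to the substitution `x ↦ t⁻¹ • x`, `y ↦ t⁻¹ • y`.
  exact and_congr (forall_forall_smul_iff hτ.ne'
      (P := fun x y => ‖A₀ t⁻¹ x‖ + |⟪y, A₀ t⁻¹ y⟫| ≤ C * t⁻¹⁻¹)) <|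
    and_congr (forall_forall_smul_iff hτ.ne'
      (P := fun x y => ‖t⁻¹ • deriv (fun s => A₀ s x) t⁻¹ + fderiv ℝ (A₀ t⁻¹) x x + A₀ t⁻¹ x‖
          + |⟪y, A₀ t⁻¹ y⟫| ≤ C * t⁻¹⁻¹)) <|
    forall_forall_smul_iff hτ.ne'
      (P := fun x y => ‖fderiv ℝ (A₀ t⁻¹) x‖
          + ‖fderiv ℝ (fun z => (⟪z, A₀ t⁻¹ z⟫ : ℝ)) y‖ ≤ C * t⁻¹⁻¹)

/-- equivalence of the decay assumption (3.4) on `B₀(t,x) = −t⁻¹A₀(1/t, x/t)`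
for `t ∈ (0,1]` and the decay assumption (3.8) on `A₀` for `t ∈ [1,∞)`, where
`S = t∂_t + x·∇ + 1` and `B̌₀(t,x) = t⁻¹ x·B₀(t,x)`.  The three clauses in each condition
correspond to the pairs `(j,k) ∈ {(0,0), (1,0), (0,1)}` with `j + k ≤ 1`, and `‖·‖_∞`
denotes the supremum over the space variable. -/
theorem decay_assumptions_equivalence
    (A₀ : ℝ → R3 → R3)
    (hA₀ : ContDiff ℝ 1 (fun p : ℝ × R3 => A₀ p.1 p.2))
    (B₀ : ℝ → R3 → R3)
    (hB₀ : ∀ t x, B₀ t x = -t⁻¹ • A₀ t⁻¹ (t⁻¹ • x)) :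
    (∃ C : ℝ, ∀ t ∈ Set.Ioc (0:ℝ) 1,
      (∀ x y : R3, ‖B₀ t x‖ + |t⁻¹ * ⟪y, B₀ t y⟫| ≤ C) ∧
      (∀ x y : R3, ‖t • deriv (fun s => B₀ s x) t‖ + |t⁻¹ * ⟪y, B₀ t y⟫| ≤ C) ∧
      (∀ x y : R3, ‖fderiv ℝ (fun z => B₀ t z) x‖
          + ‖fderiv ℝ (fun z => t⁻¹ * ⟪z, B₀ t z⟫) y‖ ≤ C * t⁻¹)) ↔
    (∃ C' : ℝ, ∀ t ∈ Set.Ici (1:ℝ),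
      (∀ x y : R3, ‖A₀ t x‖ + |⟪y, A₀ t y⟫| ≤ C' * t⁻¹) ∧
      (∀ x y : R3, ‖t • deriv (fun s => A₀ s x) t + fderiv ℝ (A₀ t) x x + A₀ t x‖
          + |⟪y, A₀ t y⟫| ≤ C' * t⁻¹) ∧
      (∀ x y : R3, ‖fderiv ℝ (A₀ t) x‖
          + ‖fderiv ℝ (fun z => (⟪z, A₀ t z⟫ : ℝ)) y‖ ≤ C' * t⁻¹)) := by
  have hA : Differentiable ℝ (fun p : ℝ × R3 => A₀ p.1 p.2) := hA₀.differentiable one_ne_zero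
  refine exists_congr fun C => ⟨fun h t ht => ?_, fun h t ht => ?_⟩
  · have ht0 : 0 < t := one_pos.trans_le ht
    have key := (decay_at_time_iff hA hB₀ (inv_pos.2 ht0) C).1
      (h t⁻¹ ⟨inv_pos.2 ht0, inv_le_one_of_one_le₀ ht⟩)
    rwa [inv_inv t] at key
  · exact (decay_at_time_iff hA hB₀ ht.1 C).2 (h t⁻¹ ((one_le_inv₀ ht.1).2 ht.2))
end
end

section
/- Strong Huygens principle for the wave equation in three space dimensions: Let R > 0 and let u : ℝ × ℝ³ → ℝ be of class C² and satisfy the wave equation □u = ∂_t²u − Δu = 0 pointwise on ℝ × ℝ³. Assume u(0,x) = 0 and ∂_t u(0,x) = 0 for all x with |x| > R. Then u(t,x) = 0 for all (t,x) with | |x| − |t| | > R. -/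
/-! The proof is Kirchhoff's formula, derived by integrating along the backward light cone. Fix
`(t, x)` and put

  `f(ρ) = ∫ (u + ρ (∂ₜu + ω · ∇u))(t - ρ, x + ρ ω) dω`,

the integral being over the unit sphere. Differentiating the integrand in `ρ` and using
`∂ₜ²u = Δu` together with the symmetry of the second derivative leaves
`2 ω · ∇u + ρ (D²u(ω, ω) - Δu)`, which is minus the sum over `i, j` of the angular derivatives
`(yᵢ ∂ⱼ - yⱼ ∂ᵢ)` of `yᵢ (∂ⱼu)(t - ρ, x + ρ y)`. The integral of an angular derivative vanishes by
rotation invariance (`integral_angular`), so `f' = 0` (`cone_hasDerivAt`).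

Hence `f(0) = f(t)`. Here `f(0)` is the area of the sphere times `u(t, x)`, and `f(t)` involves only
the Cauchy data on the sphere of radius `|t|` about `x`. Every point `z` of that sphere satisfies
`|z| ≥ ||x| - |t|| > R`, so `u`, `∂ₜu` and, since this region is open, `∇u` vanish there. The
argument is insensitive to the sign of `t`.

The surface measure is replaced by `sphMeas`, a finite nonzero rotation-invariant measure carried by
the unit sphere; its normalisation is immaterial.
-/

noncomputable section
open MeasureTheory Real
open scoped RealInnerProductSpace

open Filter Topology

/-! ### Rotation-invariant integration over the unit sphere -/

/-- The linear isometry rotating `ℝ³` by the angle `θ` in the `(i, j)` coordinate plane,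
as `y + (cos θ - 1) P y + sin θ J y` with `P` the projection onto the plane and `J` the
infinitesimal rotation. -/
def planeRot (i j : Fin 3) (hij : i ≠ j) (θ : ℝ) : R3 →ₗᵢ[ℝ] R3 where
  toFun y := y + (cos θ - 1) • (y i • EuclideanSpace.single i 1 + y j • EuclideanSpace.single j 1)
    + sin θ • (y i • EuclideanSpace.single j (1 : ℝ) - y j • EuclideanSpace.single i (1 : ℝ))
  map_add' y z := by
    simp only [PiLp.add_apply]
    module
  map_smul' c y := by
    simp only [PiLp.smul_apply, smul_eq_mul, RingHom.id_apply]
    module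
  norm_map' y := by
    have hcs := sin_sq_add_cos_sq θ
    rw [← sq_eq_sq₀ (norm_nonneg _) (norm_nonneg _), EuclideanSpace.real_norm_sq_eq,
      EuclideanSpace.real_norm_sq_eq]
    fin_cases i <;> fin_cases j <;> first
      | exact absurd rfl hij
      | (simp [Fin.sum_univ_three]
         linear_combination (norm := ring_nf) (0 : ℝ) * hcs
         simp only [sin_sq]
         ring)

/-- The (unnormalised) rotation-invariant measure on the unit sphere of `ℝ³`, regarded as a
measure on `ℝ³`: the radial projection of Lebesgue measure on the unit ball. -/
def sphMeas : Measure R3 :=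
  (volume.restrict (Metric.ball (0 : R3) 1)).map (fun y => ‖y‖⁻¹ • y)

lemma measurable_radial : Measurable (fun y : R3 => ‖y‖⁻¹ • y) := by fun_prop

instance : IsFiniteMeasure sphMeas := by
  have : IsFiniteMeasure (volume.restrict (Metric.ball (0 : R3) 1)) :=
    ⟨by simp⟩
  unfold sphMeas
  infer_instance

lemma sphMeas_univ_pos : 0 < sphMeas.real Set.univ := by
  rw [measureReal_def, ENNReal.toReal_pos_iff]
  refine ⟨?_, measure_lt_top _ _⟩
  rw [sphMeas, Measure.map_apply measurable_radial MeasurableSet.univ]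
  simpa using Metric.measure_ball_pos volume (0 : R3) one_pos

lemma ae_sphere : ∀ᵐ y ∂sphMeas, ‖y‖ = 1 := by
  rw [sphMeas, ae_map_iff measurable_radial.aemeasurable
    (measurableSet_eq_fun measurable_norm measurable_const)]
  refine ae_restrict_of_ae ?_
  have : ∀ᵐ y : R3, y ≠ 0 := Measure.ae_ne volume 0
  filter_upwards [this] with y hy
  rw [norm_smul, norm_inv, norm_norm, inv_mul_cancel₀ (norm_ne_zero_iff.2 hy)]

lemma sphMeas_map (L : R3 ≃ₗᵢ[ℝ] R3) : sphMeas.map L = sphMeas := by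
  have hL : Measurable L := L.continuous.measurable
  have hr : (volume.restrict (Metric.ball (0 : R3) 1)).map L
      = volume.restrict (Metric.ball (0 : R3) 1) := by
    have h := (L.measurePreserving.restrict_preimage
      (s := Metric.ball (0 : R3) 1) Metric.isOpen_ball.measurableSet).map_eq
    have hp : L ⁻¹' Metric.ball (0 : R3) 1 = Metric.ball 0 1 := by
      ext y; simp
    rwa [hp] at h
  rw [sphMeas, Measure.map_map hL measurable_radial]
  conv_rhs => rw [← hr, Measure.map_map measurable_radial hL]
  congr 1
  ext1 y
  simp

lemma integral_comp_planeRot (i j : Fin 3) (hij : i ≠ j) (θ : ℝ) (h : R3 → ℝ)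
    (hc : Continuous h) : ∫ y, h (planeRot i j hij θ y) ∂sphMeas = ∫ y, h y ∂sphMeas := by
  have hm := sphMeas_map ((planeRot i j hij θ).toLinearIsometryEquiv rfl)
  conv_rhs => rw [← hm]
  rw [integral_map (LinearIsometryEquiv.continuous _).measurable.aemeasurable
    hc.aestronglyMeasurable]
  simp

lemma integrable_sph (h : R3 → ℝ) (hc : Continuous h) : Integrable h sphMeas := by
  obtain ⟨C, hC⟩ := (isCompact_sphere (0 : R3) 1).exists_bound_of_continuousOn hc.continuousOn
  refine Integrable.of_bound hc.aestronglyMeasurable C ?_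
  filter_upwards [ae_sphere] with y hy
  exact hC y (by simpa using hy)

/-- Differentiation under the integral over the sphere. -/
lemma hasDerivAt_integral_sph (H H' : ℝ → R3 → ℝ) (hH : ∀ s, Continuous (H s))
    (hH' : Continuous (fun p : ℝ × R3 => H' p.1 p.2))
    (hd : ∀ s y, HasDerivAt (fun r => H r y) (H' s y) s) (s : ℝ) :
    HasDerivAt (fun r => ∫ y, H r y ∂sphMeas) (∫ y, H' s y ∂sphMeas) s := by
  obtain ⟨C, hC⟩ := ((isCompact_closedBall s 1).prod
    (isCompact_sphere (0 : R3) 1)).exists_bound_of_continuousOn hH'.continuousOn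
  refine (hasDerivAt_integral_of_dominated_loc_of_deriv_le (bound := fun _ => C)
    (Metric.closedBall_mem_nhds s one_pos)
    (Eventually.of_forall fun r => (hH r).aestronglyMeasurable) (integrable_sph _ (hH s))
    (by have : Continuous (H' s) := by fun_prop
        exact this.aestronglyMeasurable) ?_ (integrable_const C) ?_).2
  · filter_upwards [ae_sphere] with y hy r hr
    exact hC (r, y) ⟨hr, by simpa using hy⟩
  · exact Eventually.of_forall fun y r _ => hd r y

/-! ### Angular derivatives -/

/-- Angular derivatives `yᵢ ∂ⱼ h - yⱼ ∂ᵢ h` have vanishing integral over the sphere: they are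
the infinitesimal form of the rotation invariance of the measure. -/
lemma integral_angular (i j : Fin 3) (h : R3 → ℝ) (hh : ContDiff ℝ 1 h) :
    ∫ y, (y i * pdR j h y - y j * pdR i h y) ∂sphMeas = 0 := by
  by_cases hij : i = j
  · simp [hij]
  have hcD : Continuous (fderiv ℝ h) := hh.continuous_fderiv (by simp)
  let V : ℝ → R3 → R3 := fun θ y =>
    (-sin θ) • (y i • EuclideanSpace.single i (1 : ℝ) + y j • EuclideanSpace.single j (1 : ℝ))
      + cos θ • (y i • EuclideanSpace.single j (1 : ℝ) - y j • EuclideanSpace.single i (1 : ℝ))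
  have hrotc : Continuous (fun p : ℝ × R3 => planeRot i j hij p.1 p.2) := by
    simp only [planeRot, LinearIsometry.coe_mk, LinearMap.coe_mk, AddHom.coe_mk]
    fun_prop
  have hrotd : ∀ θ y, HasDerivAt (fun r => planeRot i j hij r y) (V θ y) θ := by
    intro θ y
    simp only [planeRot, LinearIsometry.coe_mk, LinearMap.coe_mk, AddHom.coe_mk]
    exact ((((hasDerivAt_cos θ).sub_const 1).smul_const _).const_add y).add
      ((hasDerivAt_sin θ).smul_const _)
  have hd := hasDerivAt_integral_sph (fun θ y => h (planeRot i j hij θ y))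
    (fun θ y => fderiv ℝ h (planeRot i j hij θ y) (V θ y))
    (fun θ => hh.continuous.comp (LinearIsometry.continuous _))
    ((hcD.comp hrotc).clm_apply (by fun_prop))
    (fun θ y => ((hh.differentiable (by simp) _).hasFDerivAt).comp_hasDerivAt θ (hrotd θ y)) 0
  simp only [integral_comp_planeRot i j hij _ h hh.continuous] at hd
  rw [← hd.unique (hasDerivAt_const _ _)]
  refine integral_congr_ae (Eventually.of_forall fun y => ?_)
  have h0 : planeRot i j hij 0 y = y := by
    simp [planeRot]
  simp [h0, V, pdR]

/-! ### Partial derivatives in terms of the space-time derivative -/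

lemma dtR_eq {u : ℝ → R3 → ℝ}
    (hu : ContDiff ℝ 2 (fun p : ℝ × R3 => u p.1 p.2)) (t : ℝ) (x : R3) :
    dtR u t x = fderiv ℝ (fun p : ℝ × R3 => u p.1 p.2) (t, x) (1, 0) := by
  have h := ((hu.differentiable (by simp) (t, x)).hasFDerivAt).comp_hasDerivAt t
    ((hasDerivAt_id t).prodMk (hasDerivAt_const t x))
  exact h.deriv

lemma pdR_eq {u : ℝ → R3 → ℝ}
    (hu : ContDiff ℝ 2 (fun p : ℝ × R3 => u p.1 p.2)) (t : ℝ) (x : R3) (k : Fin 3) :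
    pdR k (u t) x =
      fderiv ℝ (fun p : ℝ × R3 => u p.1 p.2) (t, x) (0, EuclideanSpace.single k 1) := by
  have h := ((hu.differentiable (by simp) (t, x)).hasFDerivAt).comp x
    ((hasFDerivAt_const t x).prodMk (hasFDerivAt_id x))
  have h' : fderiv ℝ (u t) x = _ := h.fderiv
  rw [pdR, h']
  simp

lemma contDiff_fderiv_apply {u : ℝ → R3 → ℝ}
    (hu : ContDiff ℝ 2 (fun p : ℝ × R3 => u p.1 p.2)) (v : ℝ × R3) :
    ContDiff ℝ 1 (fun p : ℝ × R3 => fderiv ℝ (fun p : ℝ × R3 => u p.1 p.2) p v) :=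
  (hu.fderiv_right (m := 1) (by norm_num)).clm_apply contDiff_const

lemma hasFDerivAt_fderiv_apply {u : ℝ → R3 → ℝ}
    (hu : ContDiff ℝ 2 (fun p : ℝ × R3 => u p.1 p.2))
    (v p : ℝ × R3) :
    HasFDerivAt (fun p : ℝ × R3 => fderiv ℝ (fun p : ℝ × R3 => u p.1 p.2) p v)
      ((fderiv ℝ (fderiv ℝ (fun p : ℝ × R3 => u p.1 p.2)) p).flip v) p := by
  have hD := (((hu.fderiv_right (m := 1) (by norm_num)).differentiable (by simp)) p).hasFDerivAt
  have := hD.clm_apply (hasFDerivAt_const v p)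
  refine this.congr_fderiv ?_
  ext w <;> simp

/-- The wave equation as an identity between values of the second space-time derivative. -/
lemma wave_snd {u : ℝ → R3 → ℝ}
    (hu : ContDiff ℝ 2 (fun p : ℝ × R3 => u p.1 p.2)) (t : ℝ) (x : R3)
    (hwave : dtR (dtR u) t x - lapR (u t) x = 0) :
    fderiv ℝ (fderiv ℝ (fun p : ℝ × R3 => u p.1 p.2)) (t, x) (1, 0) (1, 0) =
      ∑ k : Fin 3, fderiv ℝ (fderiv ℝ (fun p : ℝ × R3 => u p.1 p.2)) (t, x)
        (0, EuclideanSpace.single k 1) (0, EuclideanSpace.single k 1) := by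
  have h1 : dtR (dtR u) t x =
      fderiv ℝ (fderiv ℝ (fun p : ℝ × R3 => u p.1 p.2)) (t, x) (1, 0) (1, 0) := by
    unfold dtR
    have h := (hasFDerivAt_fderiv_apply hu (1, 0) (t, x)).comp_hasDerivAt t
      ((hasDerivAt_id t).prodMk (hasDerivAt_const t x))
    have e : (fun s => deriv (fun s => u s x) s) = 
        (fun p : ℝ × R3 => fderiv ℝ (fun p : ℝ × R3 => u p.1 p.2) p (1, 0)) ∘
          (fun s => (id s, x)) := by
      ext s; exact dtR_eq hu s x
    rw [e, h.deriv]
    simp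
  have h2 : lapR (u t) x = ∑ k : Fin 3,
      fderiv ℝ (fderiv ℝ (fun p : ℝ × R3 => u p.1 p.2)) (t, x)
        (0, EuclideanSpace.single k 1) (0, EuclideanSpace.single k 1) := by
    unfold lapR
    refine Finset.sum_congr rfl fun k _ => ?_
    have h := (hasFDerivAt_fderiv_apply hu (0, EuclideanSpace.single k 1) (t, x)).comp x
      ((hasFDerivAt_const t x).prodMk (hasFDerivAt_id x))
    have e : pdR k (u t) = 
        (fun p : ℝ × R3 => fderiv ℝ (fun p : ℝ × R3 => u p.1 p.2) p
          (0, EuclideanSpace.single k 1)) ∘ Prod.mk t := by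
      ext y; exact pdR_eq hu t y k
    rw [e, pdR, h.fderiv]
    simp
  rw [← h1, ← h2]; linarith

/-! ### Integration over the backward light cone -/

/-- `ρ ↦ ∫ (u + ρ (∂ₜu + ω · ∇u))(t - ρ, x + ρ ω) dω` is constant: the spherical integral over
the backward light cone of `(t, x)` has zero derivative, since the derivative of the integrand
along the cone is a sum of angular derivatives. -/
lemma cone_hasDerivAt {u : ℝ → R3 → ℝ} (hu : ContDiff ℝ 2 (fun p : ℝ × R3 => u p.1 p.2))
    (hwave : ∀ t : ℝ, ∀ x : R3, dtR (dtR u) t x - lapR (u t) x = 0) (t : ℝ) (x : R3) (ρ : ℝ) :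
    HasDerivAt (fun r : ℝ => ∫ y, (u (t - r) (x + r • y) + r *
      fderiv ℝ (fun p : ℝ × R3 => u p.1 p.2) (t - r, x + r • y) (1, y)) ∂sphMeas) 0 ρ := by
  set U : ℝ × R3 → ℝ := fun p => u p.1 p.2 with hU
  set D := fderiv ℝ U with hD
  have hDC : ContDiff ℝ 1 D := hu.fderiv_right (m := 1) (by norm_num)
  have hDc : Continuous D := hDC.continuous
  have hD2c : Continuous (fderiv ℝ D) := hDC.continuous_fderiv (by simp)
  let q : ℝ → R3 → ℝ × R3 := fun r y => (t - r, x + r • y)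
  have hq : ∀ r y, HasDerivAt (fun s => q s y) (-1, y) r := by
    intro r y
    have h1 : HasDerivAt (fun s : ℝ => t - s) (-1) r := by
      simpa using (hasDerivAt_id r).const_sub t
    have h2 : HasDerivAt (fun s : ℝ => x + s • y) y r := by
      simpa using ((hasDerivAt_id r).smul_const y).const_add x
    exact h1.prodMk h2
  have hqc : Continuous (fun p : ℝ × R3 => q p.1 p.2) := by fun_prop
  let H' : ℝ → R3 → ℝ := fun r y =>
    D (q r y) (-1, y) + (1 * D (q r y) (1, y) + r * fderiv ℝ D (q r y) (-1, y) (1, y))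
  have key := hasDerivAt_integral_sph (fun r y => U (q r y) + r * D (q r y) (1, y)) H'
    (fun r => by
      have h1 : Continuous (q r) := by fun_prop
      have h2 : Continuous fun y => D (q r y) (1, y) :=
        (hDc.comp h1).clm_apply (by fun_prop)
      exact (hu.continuous.comp h1).add (continuous_const.mul h2))
    (by
      have h1 := (hDc.comp hqc).clm_apply (g := fun p : ℝ × R3 => ((-1 : ℝ), p.2)) (by fun_prop)
      have h2 := (hDc.comp hqc).clm_apply (g := fun p : ℝ × R3 => ((1 : ℝ), p.2)) (by fun_prop)
      have h3 := ((hD2c.comp hqc).clm_apply (g := fun p : ℝ × R3 => ((-1 : ℝ), p.2))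
        (by fun_prop)).clm_apply (g := fun p : ℝ × R3 => ((1 : ℝ), p.2)) (by fun_prop)
      exact h1.add ((continuous_const.mul h2).add (continuous_fst.mul h3)))
    (fun r y => by
      have h1 := ((hu.differentiable (by simp) (q r y)).hasFDerivAt).comp_hasDerivAt r (hq r y)
      have h2 := (hasFDerivAt_fderiv_apply hu (1, y) (q r y)).comp_hasDerivAt r (hq r y)
      exact h1.add ((hasDerivAt_id r).mul h2)) ρ
  convert key using 1
  let e : Fin 3 → R3 := fun k => EuclideanSpace.single k 1
  -- With `h i j = yᵢ ∂ⱼu`, the sum over `i, j` of the angular derivatives of `h i j` is, on the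
  -- unit sphere, `-2 y · ∇u + ρ (Δu - D²u(y, y))`, the opposite of the integrand `H' ρ`.
  let h : Fin 3 → Fin 3 → R3 → ℝ := fun i j y => y i * D (q ρ y) (0, e j)
  have hqC : ContDiff ℝ 1 (q ρ) := by
    exact contDiff_const.prodMk (contDiff_const.add (contDiff_id.const_smul ρ))
  have hcoord : ∀ i : Fin 3, ContDiff ℝ 1 (fun y : R3 => y i) := fun i =>
    (EuclideanSpace.proj (𝕜 := ℝ) i).contDiff
  have hh : ∀ i j, ContDiff ℝ 1 (h i j) := fun i j =>
    (hcoord i).mul ((contDiff_fderiv_apply hu (0, e j)).comp hqC)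
  have hpd : ∀ i j k y, pdR k (h i j) y = y i * (ρ * fderiv ℝ D (q ρ y) (0, e k) (0, e j))
      + D (q ρ y) (0, e j) * (if i = k then 1 else 0) := by
    intro i j k y
    have h1 : HasFDerivAt (q ρ) ((0 : R3 →L[ℝ] ℝ).prod (ρ • ContinuousLinearMap.id ℝ R3)) y :=
      (hasFDerivAt_const _ _).prodMk (((hasFDerivAt_id y).const_smul ρ).const_add x)
    have h2 := (hasFDerivAt_fderiv_apply hu (0, e j) (q ρ y)).comp y h1
    have h3 : HasFDerivAt (h i j) _ y :=
      ((EuclideanSpace.proj (𝕜 := ℝ) i).hasFDerivAt (x := y)).mul h2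
    have h4 : ((0 : ℝ), ρ • e k) = ρ • ((0 : ℝ), e k) := by simp
    rw [pdR, h3.fderiv]
    change _ * fderiv ℝ D (q ρ y) ((0 : ℝ), ρ • e k) (0, e j) + D (q ρ y) (0, e j) * _ = _
    rw [h4, map_smul, smul_apply, smul_eq_mul]
    simp [e]
  have hz : ∫ y, ∑ i, ∑ j, (y i * pdR j (h i j) y - y j * pdR i (h i j) y) ∂sphMeas = 0 := by
    have hint : ∀ i j, Integrable
        (fun y : R3 => y i * pdR j (h i j) y - y j * pdR i (h i j) y) sphMeas := by
      intro i j
      have hc : ∀ k, Continuous (pdR k (h i j)) := fun k =>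
        ((hh i j).continuous_fderiv (by simp)).clm_apply continuous_const
      exact integrable_sph _ (((hcoord i).continuous.mul (hc j)).sub
        ((hcoord j).continuous.mul (hc i)))
    rw [integral_finsetSum _ fun i _ => integrable_finsetSum _ fun j _ => hint i j]
    refine Finset.sum_eq_zero fun i _ => ?_
    rw [integral_finsetSum _ fun j _ => hint i j]
    exact Finset.sum_eq_zero fun j _ => integral_angular i j _ (hh i j)
  rw [← neg_zero, ← hz, ← integral_neg]
  refine integral_congr_ae ?_
  filter_upwards [ae_sphere] with y hy
  have hn : y 0 ^ 2 + y 1 ^ 2 + y 2 ^ 2 = 1 := by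
    have := EuclideanSpace.real_norm_sq_eq y
    rw [hy, Fin.sum_univ_three] at this
    linarith
  have hw := wave_snd hu _ _ (hwave (t - ρ) (x + ρ • y))
  have hsym := (hu.contDiffAt (x := q ρ y)).isSymmSndFDerivAt (by simp)
  have hs : ∀ k, fderiv ℝ D (q ρ y) (1, 0) (0, e k) = fderiv ℝ D (q ρ y) (0, e k) (1, 0) :=
    fun k => hsym.eq _ _
  have hdec : ∀ c : ℝ, (c, y) = c • ((1 : ℝ), (0 : R3)) + (y 0 • ((0 : ℝ), e 0)
      + y 1 • ((0 : ℝ), e 1) + y 2 • ((0 : ℝ), e 2)) := by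
    intro c
    ext k
    · simp
    · fin_cases k <;> simp [e]
  change fderiv ℝ D (q ρ y) (1, 0) (1, 0) =
    ∑ k : Fin 3, fderiv ℝ D (q ρ y) (0, e k) (0, e k) at hw
  simp only [H', hpd]
  rw [hdec 1, hdec (-1)]
  -- On the sphere the two sides then differ by a multiple of `|y|² - 1`: the wave equation has
  -- replaced `∂ₜ²u` by `Δu`, and symmetry of `D²u` has cancelled the mixed terms.
  simp only [map_add, map_smul, add_apply, smul_apply,
    smul_eq_mul, Fin.sum_univ_three, hs, hw]
  simp
  linear_combination -ρ * (fderiv ℝ D (q ρ y) (0, e 0) (0, e 0) +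
    fderiv ℝ D (q ρ y) (0, e 1) (0, e 1) + fderiv ℝ D (q ρ y) (0, e 2) (0, e 2)) * hn

/-- strong Huygens principle in three space dimensions.  A `C²` solution of
the wave equation `∂_t²u − Δu = 0` whose Cauchy data at `t = 0` vanish for `|x| > R`
vanishes whenever `||x| − |t|| > R`. -/
theorem strong_huygens_principle
    (R : ℝ) (hR : 0 < R) (u : ℝ → R3 → ℝ)
    (hu : ContDiff ℝ 2 (fun p : ℝ × R3 => u p.1 p.2))
    (hwave : ∀ t : ℝ, ∀ x : R3, dtR (dtR u) t x - lapR (u t) x = 0)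
    (h0 : ∀ x : R3, R < ‖x‖ → u 0 x = 0)
    (h1 : ∀ x : R3, R < ‖x‖ → dtR u 0 x = 0) :
    ∀ t : ℝ, ∀ x : R3, R < abs (‖x‖ - |t|) → u t x = 0 := by
  intro t x htx
  have hdata : ∀ y : R3, R < ‖y‖ → fderiv ℝ (fun p : ℝ × R3 => u p.1 p.2) (0, y) = 0 := by
    intro y hy
    have hsp : ∀ v : R3, fderiv ℝ (fun p : ℝ × R3 => u p.1 p.2) (0, y) (0, v) = 0 := by
      intro v
      have h := ((hu.differentiable (by simp) (0, y)).hasFDerivAt).comp y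
        ((hasFDerivAt_const (0 : ℝ) y).prodMk (hasFDerivAt_id y))
      have hz : (fun z : R3 => u 0 z) =ᶠ[𝓝 y] fun _ => (0 : ℝ) := by
        filter_upwards [(isOpen_lt continuous_const continuous_norm).mem_nhds hy] with z hz
        exact h0 z hz
      have h' := h.unique ((hasFDerivAt_const (0 : ℝ) y).congr_of_eventuallyEq hz)
      simpa using DFunLike.congr_fun h' v
    have ht := h1 y hy
    rw [dtR_eq hu] at ht
    ext1 <;> ext
    · simpa using ht
    · simp [hsp]
  have hcone := cone_hasDerivAt hu hwave t x
  have hconst := is_const_of_deriv_eq_zero (fun r => (hcone r).differentiableAt)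
    (fun r => (hcone r).deriv) 0 t
  have hright : ∫ y, (u (t - t) (x + t • y) + t *
      fderiv ℝ (fun p : ℝ × R3 => u p.1 p.2) (t - t, x + t • y) (1, y)) ∂sphMeas = 0 := by
    refine integral_eq_zero_of_ae ?_
    filter_upwards [ae_sphere] with y hy
    -- The sphere of radius `|t|` about `x` lies in the region `R < |z|` where the data vanish.
    have hbig : R < ‖x + t • y‖ := by
      refine htx.trans_le ?_
      have := abs_norm_sub_norm_le x (-(t • y))
      simpa [norm_smul, hy] using this
    rw [sub_self, hdata _ hbig, h0 _ hbig]
    simp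
  rw [hright] at hconst
  simpa [sphMeas_univ_pos.ne'] using hconst
end
end
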